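/- arXiv:1303.1960 — 2 statements merged into one kernel-verified Lean document; each statement's English description precedes it below -/
import Mathlib

section
/- Let p : ℤ/7ℤ → ℝ² be seven points that affinely span ℝ², and for each i ∈ ℤ/7ℤ let cᵢ be a linear functional on ℝ² and βᵢ a real number such that cᵢ(pᵢ) = βᵢ, cᵢ(p_{i+1}) = βᵢ, and cᵢ(p_j) > βᵢ for every j ∉ {i, i+1} (indices mod 7). Then the 7×7 matrix S defined by S_{ij} = cᵢ(p_j) − βᵢ has nonnegative rank at most 6; that is, there exist a 7×6 matrix B and a 6×7 matrix C, both with all entries nonnegative, such that S = B·C. -/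
/-- Selection lemma: some rotation of the heptagon is well placed. -/
lemma hept_select (T A B : ZMod 7 → ℝ) (hT : ∀ i, 0 < T i) (hA : ∀ i, 0 < A i)
    (hB : ∀ i, 0 < B i)
    (hAB : ∀ i, A i * T (i + 3) < B i * B (i + 1))
    (hBA : ∀ i, B (i + 1) * T (i + 1) < A i * A (i + 1)) :
    ∃ t, T (t + 6) * T (t + 2) ≤ B (t + 3) * T (t + 1) ∧
      T (t + 1) * T (t + 5) ≤ A (t + 1) * T (t + 6) := by
  by_contra hcon
  push Not at hcon
  have sh : ∀ (f : ZMod 7 → ℝ) (k : ZMod 7), ∏ i, f (i + k) = ∏ i, f i := fun f k =>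
    Equiv.prod_comp (Equiv.addRight k) f
  have pT : 0 < ∏ i, T i := Finset.prod_pos fun i _ => hT i
  have pA : 0 < ∏ i, A i := Finset.prod_pos fun i _ => hA i
  have pB : 0 < ∏ i, B i := Finset.prod_pos fun i _ => hB i
  have e1 : (∏ i, A i) * (∏ i, T i) < (∏ i, B i) * (∏ i, B i) := by
    have := Finset.prod_lt_prod_of_nonempty (s := Finset.univ)
      (fun i _ => mul_pos (hA i) (hT (i + 3))) (fun i _ => hAB i) Finset.univ_nonempty
    simpa only [Finset.prod_mul_distrib, sh] using this
  have e2 : (∏ i, B i) * (∏ i, T i) < (∏ i, A i) * (∏ i, A i) := by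
    have := Finset.prod_lt_prod_of_nonempty (s := Finset.univ)
      (fun i _ => mul_pos (hB (i + 1)) (hT (i + 1))) (fun i _ => hBA i) Finset.univ_nonempty
    simpa only [Finset.prod_mul_distrib, sh] using this
  have rule : ∀ t, B (t + 3) * T (t + 1) < T (t + 6) * T (t + 2) →
      T (t + 3 + 1) * T (t + 3 + 5) ≤ A (t + 3 + 1) * T (t + 3 + 6) := by
    intro t hL
    by_contra hR
    push Not at hR
    have h1 := hAB (t + 3)
    have h2 := hBA (t + 3)
    have i1 : t + 3 + 5 = t + 1 := by rw [add_assoc]; congr 1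
    have i2 : t + 3 + 6 = t + 2 := by rw [add_assoc]; congr 1
    have i3 : t + 3 + 3 = t + 6 := by rw [add_assoc]; congr 1
    rw [i1, i2] at hR
    rw [i3] at h1
    have a1 := mul_lt_mul'' hL hR (mul_pos (hB _) (hT _)).le (mul_pos (hA _) (hT _)).le
    have a2 := mul_lt_mul'' h1 h2 (mul_pos (hA _) (hT _)).le (mul_pos (hB _) (hT _)).le
    have b1 : B (t + 3) * A (t + 3 + 1) < T (t + 6) * T (t + 3 + 1) := by
      refine lt_of_mul_lt_mul_right ?_ (mul_pos (hT (t + 1)) (hT (t + 2))).le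
      linarith
    have b2 : T (t + 6) * T (t + 3 + 1) < B (t + 3) * A (t + 3 + 1) := by
      refine lt_of_mul_lt_mul_right ?_ (mul_pos (hA (t + 3)) (hB (t + 3 + 1))).le
      linarith
    linarith
  have step : ∀ t, B (t + 3) * T (t + 1) < T (t + 6) * T (t + 2) →
      B (t + 3 + 3) * T (t + 3 + 1) < T (t + 3 + 6) * T (t + 3 + 2) := by
    intro t hL
    by_contra h
    exact absurd (rule t hL) (not_le.mpr (hcon (t + 3) (not_lt.mp h)))
  by_cases hall : ∃ t, B (t + 3) * T (t + 1) < T (t + 6) * T (t + 2)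
  · obtain ⟨t, ht⟩ := hall
    have all : ∀ n : ℕ, ∀ s : ZMod 7, s = t + 3 * n →
        B (s + 3) * T (s + 1) < T (s + 6) * T (s + 2) := by
      intro n
      induction n with
      | zero => intro s hs; simp at hs; rw [hs]; exact ht
      | succ n ih =>
        intro s hs
        have := step _ (ih _ rfl)
        have e : s = t + 3 * n + 3 := by rw [hs]; push_cast; ring
        rw [e]; exact this
    have key : ∀ s : ZMod 7, B (s + 3) * T (s + 1) < T (s + 6) * T (s + 2) := by
      intro s
      refine all (5 * (s - t)).val s ?_
      rw [ZMod.natCast_val, ZMod.cast_id]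
      have : (3 : ZMod 7) * (5 * (s - t)) = 15 * (s - t) := by ring
      rw [this, show (15 : ZMod 7) = 1 from rfl]; ring
    have := Finset.prod_lt_prod_of_nonempty (s := Finset.univ)
      (fun i _ => mul_pos (hB (i + 3)) (hT (i + 1))) (fun i _ => key i) Finset.univ_nonempty
    simp only [Finset.prod_mul_distrib, sh] at this
    have hBT := lt_of_mul_lt_mul_right this pT.le
    nlinarith [mul_pos pA pB, mul_pos pA pT, mul_pos pB pT]
  · push Not at hall
    have key := fun s => hcon s (hall s)
    have := Finset.prod_lt_prod_of_nonempty (s := Finset.univ)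
      (fun i _ => mul_pos (hA (i + 1)) (hT (i + 6))) (fun i _ => key i) Finset.univ_nonempty
    simp only [Finset.prod_mul_distrib, sh] at this
    have hAT := lt_of_mul_lt_mul_right this pT.le
    nlinarith [mul_pos pA pB, mul_pos pA pT, mul_pos pB pT]

/-- One row of the left factor, from an additive 3 by 3 array of nonnegative numbers with a
zero entry. -/
lemma hept_row (d : ZMod 7 → ℝ) (l : ZMod 7 → ℝ) (hl : ∀ j, 0 < l j) (hd : ∀ j, 0 ≤ d j)
    (i : ZMod 7) (hi : d i = 0)
    (h1 : l 1 * d 1 + l 3 * d 3 = l 2 * d 2 + l 0 * d 0)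
    (h2 : l 0 * d 0 + l 5 * d 5 = l 4 * d 4 + l 6 * d 6)
    (hX : 0 ≤ l 1 * d 1 + l 4 * d 4 - l 0 * d 0)
    (hY : 0 ≤ l 6 * d 6 + l 3 * d 3 - l 0 * d 0) :
    ∃ b : Fin 6 → ℝ, (∀ k, 0 ≤ b k) ∧ b 0 + b 3 = l 1 * d 1 ∧ b 0 + b 4 = l 2 * d 2 ∧
      b 1 + b 3 = l 0 * d 0 ∧ b 1 + b 4 = l 3 * d 3 ∧ b 1 + b 5 = l 4 * d 4 ∧
      b 2 + b 3 = l 6 * d 6 ∧ b 2 + b 5 = l 5 * d 5 := by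
  have hm : ∀ j, 0 ≤ l j * d j := fun j => mul_nonneg (hl j).le (hd j)
  have hz : l i * d i = 0 := by rw [hi, mul_zero]
  generalize hM : (fun j => l j * d j) = M at *
  have hM' : ∀ j, l j * d j = M j := fun j => congrFun hM j
  simp only [hM'] at *
  have fin : ∀ u1 u2 u3 v1 v2 v3 : ℝ, 0 ≤ u1 → 0 ≤ u2 → 0 ≤ u3 → 0 ≤ v1 → 0 ≤ v2 → 0 ≤ v3 →
      u1 + v1 = M 1 → u1 + v2 = M 2 → u2 + v1 = M 0 → u2 + v2 = M 3 → u2 + v3 = M 4 →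
      u3 + v1 = M 6 → u3 + v3 = M 5 → 
      ∃ b : Fin 6 → ℝ, (∀ k, 0 ≤ b k) ∧ b 0 + b 3 = M 1 ∧ b 0 + b 4 = M 2 ∧
      b 1 + b 3 = M 0 ∧ b 1 + b 4 = M 3 ∧ b 1 + b 5 = M 4 ∧
      b 2 + b 3 = M 6 ∧ b 2 + b 5 = M 5 := by
    intro u1 u2 u3 v1 v2 v3 a1 a2 a3 a4 a5 a6 e1 e2 e3 e4 e5 e6 e7
    refine ⟨![u1, u2, u3, v1, v2, v3], ?_, e1, e2, e3, e4, e5, e6, e7⟩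
    intro k
    fin_cases k <;> assumption
  have m0 := hm 0
  have m1 := hm 1
  have m2 := hm 2
  have m3 := hm 3
  have m4 := hm 4
  have m5 := hm 5
  have m6 := hm 6
  have hcase : M 0 = 0 ∨ M 1 = 0 ∨ M 2 = 0 ∨ M 3 = 0 ∨ M 4 = 0 ∨ M 5 = 0 ∨ M 6 = 0 := by
    fin_cases i
    · exact Or.inl hz
    · exact Or.inr (Or.inl hz)
    · exact Or.inr (Or.inr (Or.inl hz))
    · exact Or.inr (Or.inr (Or.inr (Or.inl hz)))
    · exact Or.inr (Or.inr (Or.inr (Or.inr (Or.inl hz))))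
    · exact Or.inr (Or.inr (Or.inr (Or.inr (Or.inr (Or.inl hz)))))
    · exact Or.inr (Or.inr (Or.inr (Or.inr (Or.inr (Or.inr hz)))))
  rcases hcase with h | h | h | h | h | h | h
  · apply fin (M 1) (M 0) (M 6) (M 0) (M 3) (M 4) <;> linarith
  · apply fin (M 1) (M 0) (M 6) (M 1) (M 2) (M 1 + M 4 - M 0) <;> linarith
  · apply fin (M 2) (M 3) (M 6 + M 3 - M 0) (M 1) (M 2) (M 1 + M 4 - M 0) <;> linarith
  · apply fin (M 2) (M 3) (M 6 + M 3 - M 0) (M 0) (M 3) (M 4) <;> linarith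
  · apply fin (M 1 + M 4 - M 0) (M 4) (M 5) (M 0) (M 3) (M 4) <;> linarith
  · apply fin (M 1 + M 4 - M 0) (M 4) (M 5) (M 6) (M 6 + M 3 - M 0) (M 5) <;> linarith
  · apply fin (M 1) (M 0) (M 6) (M 6) (M 6 + M 3 - M 0) (M 5) <;> linarith

lemma hept_factor (d : ZMod 7 → ZMod 7 → ℝ) (l : ZMod 7 → ℝ) (hl : ∀ j, 0 < l j)
    (hd : ∀ i j, 0 ≤ d i j) (hi : ∀ i, d i i = 0)
    (h1 : ∀ i, l 1 * d i 1 + l 3 * d i 3 = l 2 * d i 2 + l 0 * d i 0)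
    (h2 : ∀ i, l 0 * d i 0 + l 5 * d i 5 = l 4 * d i 4 + l 6 * d i 6)
    (hX : ∀ i, 0 ≤ l 1 * d i 1 + l 4 * d i 4 - l 0 * d i 0)
    (hY : ∀ i, 0 ≤ l 6 * d i 6 + l 3 * d i 3 - l 0 * d i 0) :
    ∃ (B : ZMod 7 → Fin 6 → ℝ) (C : Fin 6 → ZMod 7 → ℝ),
      (∀ i k, 0 ≤ B i k) ∧ (∀ k j, 0 ≤ C k j) ∧ ∀ i j, d i j = ∑ k, B i k * C k j := by
  choose B hB hrow using fun i =>
    hept_row (d i) l hl (hd i) i (hi i) (h1 i) (h2 i) (hX i) (hY i)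
  let E : Fin 6 → Fin 7 → ℝ := ![![0, 1, 1, 0, 0, 0, 0], ![1, 0, 0, 1, 1, 0, 0],
    ![0, 0, 0, 0, 0, 1, 1], ![1, 1, 0, 0, 0, 0, 1], ![0, 0, 1, 1, 0, 0, 0], ![0, 0, 0, 0, 1, 1, 0]]
  have hE : ∀ k j, 0 ≤ E k j := by
    intro k j
    fin_cases k <;> fin_cases j <;> simp [E]
  refine ⟨B, fun k j => E k j / l j, hB, fun k j => div_nonneg (hE k j) (hl j).le, ?_⟩
  intro i j
  have : ∑ k, B i k * (E k j / l j) = (∑ k, B i k * E k j) / l j := by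
    rw [Finset.sum_div]; exact Finset.sum_congr rfl fun k _ => by ring
  rw [this, eq_div_iff (hl j).ne']
  obtain ⟨r1, r2, r0, r3, r4, r6, r5⟩ := hrow i
  rw [mul_comm]
  have q : ∀ j : Fin 7, ∑ k, B i k * E k j = B i 0 * E 0 j + B i 1 * E 1 j + B i 2 * E 2 j +
    B i 3 * E 3 j + B i 4 * E 4 j + B i 5 * E 5 j := fun j => Fin.sum_univ_six _
  refine Eq.trans ?_ (q j).symm
  fin_cases j
  · refine r0.symm.trans ?_
    simp [E]
  · refine r1.symm.trans ?_
    simp [E]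
  · refine r2.symm.trans ?_
    simp [E]
  · refine r3.symm.trans ?_
    simp [E]
  · refine r4.symm.trans ?_
    simp [E]
  · refine r5.symm.trans ?_
    simp [E]
  · refine r6.symm.trans ?_
    simp [E]

/-- Twice the signed area of a triangle. -/
def heptDet (x y : ZMod 7 → ℝ) (i j k : ZMod 7) : ℝ :=
  (x j - x i) * (y k - y i) - (y j - y i) * (x k - x i)

lemma heptDet_rot (x y : ZMod 7 → ℝ) (i j k : ZMod 7) :
    heptDet x y i j k = heptDet x y j k i := by
  unfold heptDet; ring

lemma heptDet_affine (x y : ZMod 7 → ℝ) (u v a b c e : ZMod 7) :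
    heptDet x y a c e * heptDet x y u v b + heptDet x y a b c * heptDet x y u v e =
      heptDet x y a b e * heptDet x y u v c + heptDet x y b c e * heptDet x y u v a := by
  unfold heptDet; ring

lemma heptDet_plucker (x y : ZMod 7 → ℝ) (o a b c e : ZMod 7) :
    heptDet x y o a c * heptDet x y o b e =
      heptDet x y o a b * heptDet x y o c e + heptDet x y o a e * heptDet x y o b c := by
  unfold heptDet; ring

/-- The case where vertex `0` is well placed. -/
lemma hept_centered (x y : ZMod 7 → ℝ)
    (hp : ∀ i j : ZMod 7, j ≠ i → j ≠ i + 1 → 0 < heptDet x y i (i + 1) j)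
    (c1 : heptDet x y 4 5 6 * heptDet x y 0 1 2 ≤ heptDet x y 1 2 4 * heptDet x y 5 6 0)
    (c3 : heptDet x y 5 6 0 * heptDet x y 1 2 3 ≤ heptDet x y 5 6 3 * heptDet x y 0 1 2) :
    ∃ (B : ZMod 7 → Fin 6 → ℝ) (C : Fin 6 → ZMod 7 → ℝ),
      (∀ i k, 0 ≤ B i k) ∧ (∀ k j, 0 ≤ C k j) ∧
      ∀ i j, heptDet x y i (i + 1) j = ∑ k, B i k * C k j := by
  have z1 : ∀ i, heptDet x y i (i + 1) i = 0 := fun i => by unfold heptDet; ring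
  have z2 : ∀ i, heptDet x y i (i + 1) (i + 1) = 0 := fun i => by unfold heptDet; ring
  have hd : ∀ i j, 0 ≤ heptDet x y i (i + 1) j := by
    intro i j
    by_cases h : j = i
    · rw [h, z1]
    by_cases h' : j = i + 1
    · rw [h', z2]
    exact (hp i j h h').le
  have P : ∀ i j k : ZMod 7, k = i + 1 → j ≠ i → j ≠ i + 1 → 0 < heptDet x y i k j := by
    intro i j k hk h h'
    rw [hk]; exact hp i j h h'
  have p123 := P 1 3 2 (by decide) (by decide) (by decide)
  have p456 := P 4 6 5 (by decide) (by decide) (by decide)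
  have p230 := P 2 0 3 (by decide) (by decide) (by decide)
  have p013 := P 0 3 1 (by decide) (by decide) (by decide)
  have p012 := P 0 2 1 (by decide) (by decide) (by decide)
  have p450 := P 4 0 5 (by decide) (by decide) (by decide)
  have p560 := P 5 0 6 (by decide) (by decide) (by decide)
  have p604 := P 6 4 0 (by decide) (by decide) (by decide)
  have p340 := P 3 0 4 (by decide) (by decide) (by decide)
  have p341 := P 3 1 4 (by decide) (by decide) (by decide)
  have p346 := P 3 6 4 (by decide) (by decide) (by decide)
  have p345 := P 3 5 4 (by decide) (by decide) (by decide)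
  have p234 := P 2 4 3 (by decide) (by decide) (by decide)
  have p014 := P 0 4 1 (by decide) (by decide) (by decide)
  have p451 := P 4 1 5 (by decide) (by decide) (by decide)
  have p236 := P 2 6 3 (by decide) (by decide) (by decide)
  have p603 := P 6 3 0 (by decide) (by decide) (by decide)
  have g2 : heptDet x y 4 5 0 * heptDet x y 1 2 3 ≤ heptDet x y 2 3 0 * heptDet x y 4 5 1 := by
    refine le_of_mul_le_mul_right ?_ p341
    have k : heptDet x y 2 3 0 * heptDet x y 4 5 1 * heptDet x y 3 4 1 -
        heptDet x y 4 5 0 * heptDet x y 1 2 3 * heptDet x y 3 4 1 =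
        heptDet x y 1 2 3 * heptDet x y 3 4 5 * heptDet x y 0 1 4 +
        heptDet x y 4 5 1 * heptDet x y 0 1 3 * heptDet x y 2 3 4 := by
      unfold heptDet; ring
    have := mul_pos (mul_pos p123 p345) p014
    have := mul_pos (mul_pos p451 p013) p234
    linarith
  have g4 : heptDet x y 2 3 0 * heptDet x y 4 5 6 ≤ heptDet x y 4 5 0 * heptDet x y 2 3 6 := by
    refine le_of_mul_le_mul_right ?_ p346
    have k : heptDet x y 4 5 0 * heptDet x y 2 3 6 * heptDet x y 3 4 6 -
        heptDet x y 2 3 0 * heptDet x y 4 5 6 * heptDet x y 3 4 6 =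
        heptDet x y 4 5 6 * heptDet x y 2 3 4 * heptDet x y 6 0 3 +
        heptDet x y 2 3 6 * heptDet x y 6 0 4 * heptDet x y 3 4 5 := by
      unfold heptDet; ring
    have := mul_pos (mul_pos p456 p234) p603
    have := mul_pos (mul_pos p236 p604) p345
    linarith
  let lf : Fin 7 → ℝ := ![heptDet x y 1 2 3 * heptDet x y 4 5 6,
    heptDet x y 2 3 0 * heptDet x y 4 5 6, heptDet x y 0 1 3 * heptDet x y 4 5 6,
    heptDet x y 0 1 2 * heptDet x y 4 5 6, heptDet x y 5 6 0 * heptDet x y 1 2 3,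
    heptDet x y 6 0 4 * heptDet x y 1 2 3, heptDet x y 4 5 0 * heptDet x y 1 2 3]
  let l : ZMod 7 → ℝ := lf
  have hl : ∀ j : ZMod 7, 0 < l j := by
    intro j
    fin_cases j
    · exact mul_pos p123 p456
    · exact mul_pos p230 p456
    · exact mul_pos p013 p456
    · exact mul_pos p012 p456
    · exact mul_pos p560 p123
    · exact mul_pos p604 p123
    · exact mul_pos p450 p123
  have hpos : ∀ (j i k : ZMod 7), 0 ≤ l j * heptDet x y i (i + 1) k := fun j i k =>
    mul_nonneg (hl j).le (hd i k)
  have h1 : ∀ i : ZMod 7, l 1 * heptDet x y i (i + 1) 1 + l 3 * heptDet x y i (i + 1) 3 =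
      l 2 * heptDet x y i (i + 1) 2 + l 0 * heptDet x y i (i + 1) 0 := by
    intro i
    have := heptDet_affine x y i (i + 1) 0 1 2 3
    rw [heptDet_rot x y 0 2 3] at this
    change heptDet x y 2 3 0 * heptDet x y 4 5 6 * _ + heptDet x y 0 1 2 * heptDet x y 4 5 6 * _ =
      heptDet x y 0 1 3 * heptDet x y 4 5 6 * _ + heptDet x y 1 2 3 * heptDet x y 4 5 6 * _
    linear_combination heptDet x y 4 5 6 * this
  have h2 : ∀ i : ZMod 7, l 0 * heptDet x y i (i + 1) 0 + l 5 * heptDet x y i (i + 1) 5 =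
      l 4 * heptDet x y i (i + 1) 4 + l 6 * heptDet x y i (i + 1) 6 := by
    intro i
    have := heptDet_affine x y i (i + 1) 4 5 6 0
    rw [heptDet_rot x y 4 6 0] at this
    change heptDet x y 1 2 3 * heptDet x y 4 5 6 * _ + heptDet x y 6 0 4 * heptDet x y 1 2 3 * _ =
      heptDet x y 5 6 0 * heptDet x y 1 2 3 * _ + heptDet x y 4 5 0 * heptDet x y 1 2 3 * _
    linear_combination heptDet x y 1 2 3 * this
  have zz : ∀ j i k : ZMod 7, (k = i ∨ k = i + 1) → l j * heptDet x y i (i + 1) k = 0 := by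
    rintro j i k (h | h)
    · rw [h, z1, mul_zero]
    · rw [h, z2, mul_zero]
  have hc : ∀ i : ZMod 7, i = 0 ∨ i = 1 ∨ i = 2 ∨ i = 3 ∨ i = 4 ∨ i = 5 ∨ i = 6 := by decide
  refine hept_factor (fun i j => heptDet x y i (i + 1) j) l hl hd z1 h1 h2 ?_ ?_
  · intro i
    rcases hc i with rfl | rfl | rfl | rfl | rfl | rfl | rfl
    · linarith [hpos 1 0 1, hpos 4 0 4, zz 0 0 0 (by decide)]
    · have k : l 0 * heptDet x y 1 (1 + 1) 0 ≤ l 4 * heptDet x y 1 (1 + 1) 4 := by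
        change heptDet x y 1 2 3 * heptDet x y 4 5 6 * heptDet x y 1 2 0 ≤
          heptDet x y 5 6 0 * heptDet x y 1 2 3 * heptDet x y 1 2 4
        rw [← heptDet_rot x y 0 1 2]
        linarith [mul_le_mul_of_nonneg_left c1 p123.le]
      linarith [zz 1 1 1 (by decide)]
    · linarith [h1 2, zz 2 2 2 (by decide), zz 3 2 3 (by decide), hpos 4 2 4]
    · linarith [h1 3, zz 3 3 3 (by decide), zz 4 3 4 (by decide), hpos 2 3 2]
    · have k : l 0 * heptDet x y 4 (4 + 1) 0 ≤ l 1 * heptDet x y 4 (4 + 1) 1 := by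
        change heptDet x y 1 2 3 * heptDet x y 4 5 6 * heptDet x y 4 5 0 ≤
          heptDet x y 2 3 0 * heptDet x y 4 5 6 * heptDet x y 4 5 1
        linarith [mul_le_mul_of_nonneg_left g2 p456.le]
      linarith [zz 4 4 4 (by decide)]
    · linarith [h2 5, zz 5 5 5 (by decide), zz 6 5 6 (by decide), hpos 1 5 1]
    · linarith [hpos 1 6 1, hpos 4 6 4, zz 0 6 0 (by decide)]
  · intro i
    rcases hc i with rfl | rfl | rfl | rfl | rfl | rfl | rfl
    · linarith [hpos 6 0 6, hpos 3 0 3, zz 0 0 0 (by decide)]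
    · linarith [h1 1, zz 1 1 1 (by decide), zz 2 1 2 (by decide), hpos 6 1 6]
    · have k : l 0 * heptDet x y 2 (2 + 1) 0 ≤ l 6 * heptDet x y 2 (2 + 1) 6 := by
        change heptDet x y 1 2 3 * heptDet x y 4 5 6 * heptDet x y 2 3 0 ≤
          heptDet x y 4 5 0 * heptDet x y 1 2 3 * heptDet x y 2 3 6
        linarith [mul_le_mul_of_nonneg_left g4 p123.le]
      linarith [zz 3 2 3 (by decide)]
    · linarith [h2 3, zz 3 3 3 (by decide), zz 4 3 4 (by decide), hpos 5 3 5]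
    · linarith [h2 4, zz 4 4 4 (by decide), zz 5 4 5 (by decide), hpos 3 4 3]
    · have k : l 0 * heptDet x y 5 (5 + 1) 0 ≤ l 3 * heptDet x y 5 (5 + 1) 3 := by
        change heptDet x y 1 2 3 * heptDet x y 4 5 6 * heptDet x y 5 6 0 ≤
          heptDet x y 0 1 2 * heptDet x y 4 5 6 * heptDet x y 5 6 3
        linarith [mul_le_mul_of_nonneg_left c3 p456.le]
      linarith [zz 6 5 6 (by decide)]
    · linarith [hpos 6 6 6, hpos 3 6 3, zz 0 6 0 (by decide)]

lemma heptDet_shift (x y : ZMod 7 → ℝ) (i s a b c : ZMod 7) :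
    heptDet (fun k => x (k + (i + s))) (fun k => y (k + (i + s))) a b c =
      heptDet (fun k => x (k + i)) (fun k => y (k + i)) (a + s) (b + s) (c + s) := by
  have e : ∀ a : ZMod 7, a + (i + s) = a + s + i := fun a => by ring
  simp only [heptDet, e]

/-- Positively oriented heptagons. -/
lemma hept_oriented (x y : ZMod 7 → ℝ)
    (hp : ∀ i j : ZMod 7, j ≠ i → j ≠ i + 1 → 0 < heptDet x y i (i + 1) j) :
    ∃ (B : ZMod 7 → Fin 6 → ℝ) (C : Fin 6 → ZMod 7 → ℝ),
      (∀ i k, 0 ≤ B i k) ∧ (∀ k j, 0 ≤ C k j) ∧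
      ∀ i j, heptDet x y i (i + 1) j = ∑ k, B i k * C k j := by
  have hps : ∀ t i j : ZMod 7, j ≠ i → j ≠ i + 1 →
      0 < heptDet (fun k => x (k + t)) (fun k => y (k + t)) i (i + 1) j := by
    intro t i j h h'
    have := hp (i + t) (j + t) (fun e => h (add_right_cancel e))
      (fun e => h' (by linear_combination e))
    have e : i + t + 1 = i + 1 + t := by ring
    rw [e] at this
    exact this
  have P : ∀ t i j k : ZMod 7, k = i + 1 → j ≠ i → j ≠ i + 1 →
      0 < heptDet (fun k => x (k + t)) (fun k => y (k + t)) i k j := by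
    intro t i j k hk h h'
    rw [hk]; exact hps t i j h h'
  obtain ⟨t, ht1, ht2⟩ := hept_select
    (fun t => heptDet (fun k => x (k + t)) (fun k => y (k + t)) 0 1 6)
    (fun t => heptDet (fun k => x (k + t)) (fun k => y (k + t)) 0 1 3)
    (fun t => heptDet (fun k => x (k + t)) (fun k => y (k + t)) 2 3 0)
    (fun t => P t 0 6 1 (by decide) (by decide) (by decide))
    (fun t => P t 0 3 1 (by decide) (by decide) (by decide))
    (fun t => P t 2 0 3 (by decide) (by decide) (by decide))
    (by
      intro i
      simp only [heptDet_shift]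
      have q1 := P i 3 0 4 (by decide) (by decide) (by decide)
      have q2 := P i 1 3 2 (by decide) (by decide) (by decide)
      have q := mul_pos q1 q2
      revert q
      generalize (fun k => x (k + i)) = X
      generalize (fun k => y (k + i)) = Y
      intro q
      change heptDet X Y 0 1 3 * heptDet X Y 3 4 2 < heptDet X Y 2 3 0 * heptDet X Y 3 4 1
      have : heptDet X Y 2 3 0 * heptDet X Y 3 4 1 = heptDet X Y 0 1 3 * heptDet X Y 3 4 2 +
        heptDet X Y 3 4 0 * heptDet X Y 1 2 3 := by unfold heptDet; ring
      linarith)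
    (by
      intro i
      simp only [heptDet_shift]
      have q1 := P i 0 4 1 (by decide) (by decide) (by decide)
      have q2 := P i 1 3 2 (by decide) (by decide) (by decide)
      have q := mul_pos q1 q2
      revert q
      generalize (fun k => x (k + i)) = X
      generalize (fun k => y (k + i)) = Y
      intro q
      change heptDet X Y 3 4 1 * heptDet X Y 1 2 0 < heptDet X Y 0 1 3 * heptDet X Y 1 2 4
      have : heptDet X Y 0 1 3 * heptDet X Y 1 2 4 = heptDet X Y 3 4 1 * heptDet X Y 1 2 0 +
        heptDet X Y 0 1 4 * heptDet X Y 1 2 3 := by unfold heptDet; ring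
      linarith)
  simp only [heptDet_shift] at ht1 ht2
  have hq := hps t
  have main : ∃ (B : ZMod 7 → Fin 6 → ℝ) (C : Fin 6 → ZMod 7 → ℝ),
      (∀ i k, 0 ≤ B i k) ∧ (∀ k j, 0 ≤ C k j) ∧
      ∀ i j, heptDet (fun k => x (k + t)) (fun k => y (k + t)) i (i + 1) j =
        ∑ k, B i k * C k j := by
    revert ht1 ht2 hq
    generalize (fun k => x (k + t)) = X
    generalize (fun k => y (k + t)) = Y
    intro ht1 ht2 hq
    change heptDet X Y 6 0 5 * heptDet X Y 2 3 1 ≤ heptDet X Y 5 6 3 * heptDet X Y 1 2 0 at ht1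
    change heptDet X Y 1 2 0 * heptDet X Y 5 6 4 ≤ heptDet X Y 1 2 4 * heptDet X Y 6 0 5 at ht2
    rw [← heptDet_rot X Y 5 6 0, ← heptDet_rot X Y 0 1 2] at ht1 ht2
    rw [← heptDet_rot X Y 1 2 3] at ht1
    rw [← heptDet_rot X Y 4 5 6, mul_comm (heptDet X Y 0 1 2)] at ht2
    exact hept_centered X Y hq ht2 ht1
  obtain ⟨B, C, hB, hC, h⟩ := main
  refine ⟨fun i k => B (i - t) k, fun k j => C k (j - t), fun i k => hB _ k, fun k j => hC k _, ?_⟩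
  intro i j
  rw [← h]
  have e : i - t + 1 + t = i + 1 := by ring
  simp only [heptDet, sub_add_cancel, e]

lemma hept_slack (x y : ZMod 7 → ℝ) (s : ZMod 7 → ZMod 7 → ℝ)
    (hs : ∀ i j : ZMod 7, j ≠ i → j ≠ i + 1 → 0 < s i j)
    (h : ∀ i j, s i j * heptDet x y i (i + 1) (i + 2) =
      s i (i + 2) * heptDet x y i (i + 1) j)
    (h0 : 0 < heptDet x y 0 1 2) :
    ∃ (B : ZMod 7 → Fin 6 → ℝ) (C : Fin 6 → ZMod 7 → ℝ),
      (∀ i k, 0 ≤ B i k) ∧ (∀ k j, 0 ≤ C k j) ∧ ∀ i j, s i j = ∑ k, B i k * C k j := by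
  have n1 : ∀ i : ZMod 7, i + 2 ≠ i := by decide
  have n2 : ∀ i : ZMod 7, i + 2 ≠ i + 1 := by decide
  have n3 : ∀ i : ZMod 7, i ≠ i + 1 := by decide
  have n4 : ∀ i : ZMod 7, i ≠ i + 1 + 1 := by decide
  have hs2 : ∀ i, 0 < s i (i + 2) := fun i => hs i _ (n1 i) (n2 i)
  have step : ∀ i : ZMod 7, 0 < heptDet x y i (i + 1) (i + 2) →
      0 < heptDet x y (i + 1) (i + 1 + 1) (i + 1 + 2) := by
    intro i hi
    have a := h (i + 1) i
    have e : i + 2 = i + 1 + 1 := by ring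
    rw [heptDet_rot, e] at hi
    have b := mul_pos (hs2 (i + 1)) hi
    rw [← a] at b
    exact pos_of_mul_pos_right b (hs (i + 1) i (n3 i) (n4 i)).le
  have all : ∀ n : ℕ, 0 < heptDet x y n (n + 1) (n + 2) := by
    intro n
    induction n with
    | zero => simpa using h0
    | succ n ih => push_cast; exact step _ ih
  have sg : ∀ i : ZMod 7, 0 < heptDet x y i (i + 1) (i + 2) := by
    intro i
    have := all i.val
    rwa [ZMod.natCast_val, ZMod.cast_id] at this
  obtain ⟨B, C, hB, hC, hBC⟩ := hept_oriented x y (by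
    intro i j h1 h2
    have a := mul_pos (hs i j h1 h2) (sg i)
    rw [h] at a
    exact pos_of_mul_pos_right a (hs2 i).le)
  refine ⟨fun i k => s i (i + 2) / heptDet x y i (i + 1) (i + 2) * B i k, C,
    fun i k => mul_nonneg (div_nonneg (hs2 i).le (sg i).le) (hB i k), hC, ?_⟩
  intro i j
  have : ∑ k, s i (i + 2) / heptDet x y i (i + 1) (i + 2) * B i k * C k j =
      s i (i + 2) / heptDet x y i (i + 1) (i + 2) * ∑ k, B i k * C k j := by
    rw [Finset.mul_sum]; exact Finset.sum_congr rfl fun k _ => by ring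
  rw [this, ← hBC, div_mul_eq_mul_div, eq_div_iff (sg i).ne']
  exact h i j

/-- The slack matrix `S i j = c i (p j) - β i` of a convex heptagon
(vertices `p : ZMod 7 → ℝ²` in cyclic order, edge `i` supported by `c i ⬝ x ≥ β i`)
has nonnegative rank at most 6. -/
theorem heptagon_slack_nonneg_rank_le_six
    (p : ZMod 7 → (Fin 2 → ℝ))
    (hspan : affineSpan ℝ (Set.range p) = ⊤)
    (c : ZMod 7 → ((Fin 2 → ℝ) →ₗ[ℝ] ℝ)) (β : ZMod 7 → ℝ)
    (hedge : ∀ i : ZMod 7, c i (p i) = β i ∧ c i (p (i + 1)) = β i)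
    (hpos : ∀ i j : ZMod 7, j ≠ i → j ≠ i + 1 → β i < c i (p j)) :
    ∃ (B : Matrix (ZMod 7) (Fin 6) ℝ) (C : Matrix (Fin 6) (ZMod 7) ℝ),
      (∀ i j, 0 ≤ B i j) ∧ (∀ i j, 0 ≤ C i j) ∧
      (Matrix.of fun i j : ZMod 7 => c i (p j) - β i) = B * C := by
  have lin : ∀ i v, c i v = c i (Pi.single 0 1) * v 0 + c i (Pi.single 1 1) * v 1 := by
    intro i v
    have e : v = v 0 • (Pi.single 0 1 : Fin 2 → ℝ) + v 1 • (Pi.single 1 1 : Fin 2 → ℝ) := by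
      ext k
      fin_cases k <;> simp
    conv_lhs => rw [e]
    rw [map_add, map_smul, map_smul, smul_eq_mul, smul_eq_mul]
    ring
  set x : ZMod 7 → ℝ := fun j => p j 0 with hx
  set y : ZMod 7 → ℝ := fun j => p j 1 with hy
  have hc : ∀ i j, c i (p j) = c i (Pi.single 0 1) * x j + c i (Pi.single 1 1) * y j :=
    fun i j => lin i (p j)
  obtain ⟨a, ha⟩ : ∃ a : ZMod 7 → ℝ, ∀ i, a i = c i (Pi.single 0 1) := ⟨_, fun _ => rfl⟩
  obtain ⟨b, hb⟩ : ∃ b : ZMod 7 → ℝ, ∀ i, b i = c i (Pi.single 1 1) := ⟨_, fun _ => rfl⟩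
  simp only [← ha, ← hb] at hc
  simp only [hc] at hedge hpos ⊢
  clear_value x y
  have n1 : ∀ i : ZMod 7, i ≠ i + 1 := by decide
  have n2 : ∀ i : ZMod 7, i ≠ i + 1 + 1 := by decide
  have h : ∀ i j, (a i * x j + b i * y j - β i) * heptDet x y i (i + 1) (i + 2) =
      (a i * x (i + 2) + b i * y (i + 2) - β i) * heptDet x y i (i + 1) j := by
    intro i j
    obtain ⟨e1, e2⟩ := hedge i
    rw [← e1] at e2 ⊢
    unfold heptDet
    have e3 : a i * (x (i + 1) - x i) + b i * (y (i + 1) - y i) = 0 := by linarith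
    linear_combination ((x j - x i) * (y (i + 2) - y i) - (y j - y i) * (x (i + 2) - x i)) * e3
  have hs : ∀ i j : ZMod 7, j ≠ i → j ≠ i + 1 → 0 < a i * x j + b i * y j - β i :=
    fun i j h1 h2 => sub_pos.mpr (hpos i j h1 h2)
  have hne : heptDet x y 0 1 2 ≠ 0 := by
    intro h0
    have s2 := hs 0 2 (by decide) (by decide)
    obtain ⟨e1, e2⟩ := hedge 0
    obtain ⟨f1, f2⟩ := hedge 1
    have s0 := hs 1 0 (by decide) (by decide)
    rw [zero_add] at e2
    unfold heptDet at h0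
    have e3 : a 0 * (x 1 - x 0) + b 0 * (y 1 - y 0) = 0 := by linarith
    have w1 : (x 1 - x 0) * (a 0 * x 2 + b 0 * y 2 - β 0) = 0 := by
      rw [← e1]
      linear_combination (x 2 - x 0) * e3 + b 0 * h0
    have w2 : (y 1 - y 0) * (a 0 * x 2 + b 0 * y 2 - β 0) = 0 := by
      rw [← e1]
      linear_combination (y 2 - y 0) * e3 - a 0 * h0
    have v1 := (mul_eq_zero.mp w1).resolve_right s2.ne'
    have v2 := (mul_eq_zero.mp w2).resolve_right s2.ne'
    have v1' : x 1 = x 0 := by linarith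
    have v2' : y 1 = y 0 := by linarith
    rw [v1', v2'] at f1
    linarith
  have fin : ∃ (B : ZMod 7 → Fin 6 → ℝ) (C : Fin 6 → ZMod 7 → ℝ),
      (∀ i k, 0 ≤ B i k) ∧ (∀ k j, 0 ≤ C k j) ∧
      ∀ i j, a i * x j + b i * y j - β i = ∑ k, B i k * C k j := by
    rcases lt_or_gt_of_ne hne with hneg | hpos0
    · have sw : ∀ i j k, heptDet y x i j k = - heptDet x y i j k := by
        intro i j k; unfold heptDet; ring
      refine hept_slack y x (fun i j => a i * x j + b i * y j - β i) hs ?_ ?_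
      · intro i j
        rw [sw, sw]
        linear_combination - h i j
      · rw [sw]; linarith
    · exact hept_slack x y (fun i j => a i * x j + b i * y j - β i) hs h hpos0
  obtain ⟨B, C, hB, hC, hBC⟩ := fin
  refine ⟨Matrix.of B, Matrix.of C, hB, hC, ?_⟩
  ext i j
  simpa [Matrix.mul_apply] using hBC i j
end

section
/- Let ψ = (a₁,a₂,a₃,b₁,b₂,b₃) be a real vector such that the matrix V = 𝒱(ψ) satisfies V_{ij} > 0 whenever i ∉ {j−1, j} (indices mod 7). If α₁(2) + β₁(2) ≤ α₂(2) + β₂(2), then α₂(6) + β₂(6) < α₃(6) + β₃(6). -/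
/-- The rows of the 7-by-3 matrix `W(a₁,a₂,a₃,b₁,b₂,b₃)`, indexed by `ZMod 7`
(index `k` representing the `k`-th row, with `7 ≡ 0`): `Wrow ... k` is the
`k`-th column of the 3-by-7 matrix with rows `(0,0,1,1,a₁,a₂,a₃)`,
`(1,0,0,1,1,1,1)`, `(1,1,0,0,b₁,b₂,b₃)`. -/
noncomputable def Wrow (a₁ a₂ a₃ b₁ b₂ b₃ : ℝ) (k : ZMod 7) : Fin 3 → ℝ :=
  fun r =>
    (Matrix.of ![![(0 : ℝ), 0, 1, 1, a₁, a₂, a₃],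
                 ![1, 0, 0, 1, 1, 1, 1],
                 ![1, 1, 0, 0, b₁, b₂, b₃]]) r ⟨(k - 1).val, ZMod.val_lt _⟩

/-- The 7-by-7 matrix `𝒱(a₁,a₂,a₃,b₁,b₂,b₃)`, indexed by `ZMod 7`: its `(i,j)` entry
is the determinant of the 3-by-3 matrix with rows `W_{i-1}`, `W_{j-2}`, `W_{j-1}`. -/
noncomputable def Vmat (a₁ a₂ a₃ b₁ b₂ b₃ : ℝ) : Matrix (ZMod 7) (ZMod 7) ℝ :=
  Matrix.of fun i j =>
    Matrix.det (Matrix.of ![Wrow a₁ a₂ a₃ b₁ b₂ b₃ (i - 1),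
                            Wrow a₁ a₂ a₃ b₁ b₂ b₃ (j - 2),
                            Wrow a₁ a₂ a₃ b₁ b₂ b₃ (j - 1)])

/-- The six sequences `α₁(t),α₂(t),α₃(t),β₁(t),β₂(t),β₃(t)` of Notation 4, packaged as
`seqV a₁ a₂ a₃ b₁ b₂ b₃ t = ((α₁(t), α₂(t), α₃(t)), (β₁(t), β₂(t), β₃(t)))`, with
initial value `((a₁,a₂,a₃),(b₁,b₂,b₃))` and the recursions
`α₁(t+1) = (1 - α₃(t) - β₃(t))/(1 - β₃(t))`,
`α_{χ+1}(t+1) = (α_χ(t) - α_χ(t)β₃(t) - α₃(t) + α₃(t)β_χ(t))/(α_χ(t) - α_χ(t)β₃(t))`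
for `χ ∈ {1,2}`, `β₁(t+1) = α₃(t)`, `β₂(t+1) = α₃(t)/α₁(t)`, `β₃(t+1) = α₃(t)/α₂(t)`. -/
noncomputable def seqV (a₁ a₂ a₃ b₁ b₂ b₃ : ℝ) : ℕ → (ℝ × ℝ × ℝ) × (ℝ × ℝ × ℝ)
  | 0 => ((a₁, a₂, a₃), (b₁, b₂, b₃))
  | t + 1 =>
      let s := seqV a₁ a₂ a₃ b₁ b₂ b₃ t
      let α₁ := s.1.1
      let α₂ := s.1.2.1
      let α₃ := s.1.2.2
      let β₁ := s.2.1
      let β₂ := s.2.2.1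
      let β₃ := s.2.2.2
      (((1 - α₃ - β₃) / (1 - β₃),
        (α₁ - α₁ * β₃ - α₃ + α₃ * β₁) / (α₁ - α₁ * β₃),
        (α₂ - α₂ * β₃ - α₃ + α₃ * β₂) / (α₂ - α₂ * β₃)),
       (α₃, α₃ / α₁, α₃ / α₂))

/-- `alphaV χ t` is `α_χ(t)` (for `χ ∈ {1,2,3}`, 1-indexed via `Fin 3`). -/
noncomputable def alphaV (a₁ a₂ a₃ b₁ b₂ b₃ : ℝ) (χ : Fin 3) (t : ℕ) : ℝ :=
  ![(seqV a₁ a₂ a₃ b₁ b₂ b₃ t).1.1,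
    (seqV a₁ a₂ a₃ b₁ b₂ b₃ t).1.2.1,
    (seqV a₁ a₂ a₃ b₁ b₂ b₃ t).1.2.2] χ

/-- `betaV χ t` is `β_χ(t)` (for `χ ∈ {1,2,3}`, 1-indexed via `Fin 3`). -/
noncomputable def betaV (a₁ a₂ a₃ b₁ b₂ b₃ : ℝ) (χ : Fin 3) (t : ℕ) : ℝ :=
  ![(seqV a₁ a₂ a₃ b₁ b₂ b₃ t).2.1,
    (seqV a₁ a₂ a₃ b₁ b₂ b₃ t).2.2.1,
    (seqV a₁ a₂ a₃ b₁ b₂ b₃ t).2.2.2] χ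

/-- The 3-by-3 determinant with rows `u`, `v`, `w`. -/
noncomputable def br (u v w : Fin 3 → ℝ) : ℝ :=
  u 0 * (v 1 * w 2 - v 2 * w 1) - u 1 * (v 0 * w 2 - v 2 * w 0) + u 2 * (v 0 * w 1 - v 1 * w 0)

/-- First normalized coordinate of `p` in the projective frame `A, B, C, D`. -/
noncomputable def cA (A B C D p : Fin 3 → ℝ) : ℝ := br p A B * br D B C / (br p B C * br D A B)

/-- Second normalized coordinate of `p` in the projective frame `A, B, C, D`. -/
noncomputable def cB (A B C D p : Fin 3 → ℝ) : ℝ := br p C D * br A B C / (br p B C * br A C D)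

lemma br_cyc (u v w : Fin 3 → ℝ) : br u v w = br v w u := by unfold br; ring

lemma one_sub_cB (A B C D p : Fin 3 → ℝ) (h1 : br p B C ≠ 0) (h2 : br A C D ≠ 0) :
    1 - cB A B C D p = br p A C * br B C D / (br p B C * br A C D) := by
  have e : br p B C * br A C D - br p C D * br A B C = br p A C * br B C D := by
    unfold br; ring
  unfold cB
  rw [← e]
  field_simp

lemma step_beta (A B C D p P : Fin 3 → ℝ) (h1 : br p B C ≠ 0) (h2 : br p A B ≠ 0)
    (h3 : br P B C ≠ 0) (h4 : br D A B ≠ 0) (h5 : br D B C ≠ 0) :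
    cA A B C D P / cA A B C D p = cB P A B C p := by
  unfold cA cB
  field_simp

lemma step_alpha (A B C D p P : Fin 3 → ℝ) (h1 : br p B C ≠ 0) (h2 : br p A B ≠ 0)
    (h3 : br P B C ≠ 0) (h4 : br D A B ≠ 0) (h5 : br D B C ≠ 0) (h6 : br A C D ≠ 0)
    (h7 : br P A C ≠ 0) (h8 : br B C D ≠ 0) :
    (cA A B C D p - cA A B C D p * cB A B C D P - cA A B C D P
      + cA A B C D P * cB A B C D p) / (cA A B C D p - cA A B C D p * cB A B C D P)
      = cA P A B C p := by
  have hP := one_sub_cB A B C D P h3 h6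
  have hp := one_sub_cB A B C D p h1 h6
  have hP0 : 1 - cB A B C D P ≠ 0 := by
    rw [hP]; positivity
  have ha0 : cA A B C D p ≠ 0 := by unfold cA; positivity
  have e : br p A B * br P A C - br P A B * br p A C = br p P A * br C A B := by
    unfold br; ring
  have e7 : br C P A = br P A C := br_cyc _ _ _
  have e1 : (cA A B C D p - cA A B C D p * cB A B C D P - cA A B C D P
      + cA A B C D P * cB A B C D p) / (cA A B C D p - cA A B C D p * cB A B C D P)
      = 1 - cA A B C D P * (1 - cB A B C D p) / (cA A B C D p * (1 - cB A B C D P)) := by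
    have : cA A B C D p - cA A B C D p * cB A B C D P ≠ 0 := by
      have := mul_ne_zero ha0 hP0
      rwa [mul_sub, mul_one] at this
    field_simp
    ring
  rw [e1, hP, hp]
  have e2 : cA P A B C p = (br p A B * br P A C - br P A B * br p A C) / (br p A B * br P A C) := by
    rw [e]; unfold cA; rw [e7]
  rw [e2]
  unfold cA
  field_simp

lemma cA_self (A B C D : Fin 3 → ℝ) (h4 : br D A B ≠ 0) (h5 : br D B C ≠ 0) :
    cA A B C D D = 1 := by
  unfold cA; field_simp

lemma cB_self (A B C D : Fin 3 → ℝ) : cB A B C D D = 0 := by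
  have : br D C D = 0 := by unfold br; ring
  simp [cB, this]

lemma seqV_closed (a₁ a₂ a₃ b₁ b₂ b₃ : ℝ) (w : ZMod 7 → Fin 3 → ℝ)
    (H : ∀ k l : ZMod 7, k ≠ l → k ≠ l + 1 → br (w k) (w l) (w (l + 1)) ≠ 0)
    (t : ℕ) (s : ZMod 7) (x : (ℝ × ℝ × ℝ) × (ℝ × ℝ × ℝ))
    (hx : x = seqV a₁ a₂ a₃ b₁ b₂ b₃ t)
    (h : x =
      ((cA (w s) (w (s+1)) (w (s+2)) (w (s+3)) (w (s+4)),
        cA (w s) (w (s+1)) (w (s+2)) (w (s+3)) (w (s+5)),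
        cA (w s) (w (s+1)) (w (s+2)) (w (s+3)) (w (s+6))),
       (cB (w s) (w (s+1)) (w (s+2)) (w (s+3)) (w (s+4)),
        cB (w s) (w (s+1)) (w (s+2)) (w (s+3)) (w (s+5)),
        cB (w s) (w (s+1)) (w (s+2)) (w (s+3)) (w (s+6))))) :
    seqV a₁ a₂ a₃ b₁ b₂ b₃ (t+1) =
      ((cA (w (s+6)) (w s) (w (s+1)) (w (s+2)) (w (s+3)),
        cA (w (s+6)) (w s) (w (s+1)) (w (s+2)) (w (s+4)),
        cA (w (s+6)) (w s) (w (s+1)) (w (s+2)) (w (s+5))),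
       (cB (w (s+6)) (w s) (w (s+1)) (w (s+2)) (w (s+3)),
        cB (w (s+6)) (w s) (w (s+1)) (w (s+2)) (w (s+4)),
        cB (w (s+6)) (w s) (w (s+1)) (w (s+2)) (w (s+5)))) := by
  have G : ∀ k l m : ZMod 7, m = l + 1 → k ≠ l → k ≠ m → br (w k) (w l) (w m) ≠ 0 := by
    rintro k l m rfl h1 h2; exact H k l h1 h2
  have hDAB := G (s+3) s (s+1) rfl (by clear * - s; revert s; decide) (by clear * - s; revert s; decide)
  have hDBC := G (s+3) (s+1) (s+2) (by ring) (by clear * - s; revert s; decide) (by clear * - s; revert s; decide)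
  have hACD := G s (s+2) (s+3) (by ring) (by clear * - s; revert s; decide) (by clear * - s; revert s; decide)
  have hBCD := G (s+1) (s+2) (s+3) (by ring) (by clear * - s; revert s; decide) (by clear * - s; revert s; decide)
  have hPBC := G (s+6) (s+1) (s+2) (by ring) (by clear * - s; revert s; decide) (by clear * - s; revert s; decide)
  have hPAC : br (w (s+6)) (w s) (w (s+2)) ≠ 0 := by
    rw [← br_cyc]
    exact G (s+2) (s+6) s (by clear * - s; revert s; decide) (by clear * - s; revert s; decide) (by clear * - s; revert s; decide)
  have h4AB := G (s+4) s (s+1) rfl (by clear * - s; revert s; decide) (by clear * - s; revert s; decide)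
  have h4BC := G (s+4) (s+1) (s+2) (by ring) (by clear * - s; revert s; decide) (by clear * - s; revert s; decide)
  have h5AB := G (s+5) s (s+1) rfl (by clear * - s; revert s; decide) (by clear * - s; revert s; decide)
  have h5BC := G (s+5) (s+1) (s+2) (by ring) (by clear * - s; revert s; decide) (by clear * - s; revert s; decide)
  rw [seqV, ← hx, h]
  dsimp only
  have a3 := step_alpha _ _ _ _ _ _ hDBC hDAB hPBC hDAB hDBC hACD hPAC hBCD
  have b3 := step_beta _ _ _ _ _ _ hDBC hDAB hPBC hDAB hDBC
  rw [cA_self _ _ _ _ hDAB hDBC] at a3 b3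
  rw [cB_self] at a3
  rw [step_alpha _ _ _ _ _ _ h4BC h4AB hPBC hDAB hDBC hACD hPAC hBCD,
    step_alpha _ _ _ _ _ _ h5BC h5AB hPBC hDAB hDBC hACD hPAC hBCD,
    step_beta _ _ _ _ _ _ h4BC h4AB hPBC hDAB hDBC,
    step_beta _ _ _ _ _ _ h5BC h5AB hPBC hDAB hDBC, ← a3, ← b3]
  congr 2
  · congr 1 <;> ring
  · ring

/-- If `V = 𝒱(a₁,a₂,a₃,b₁,b₂,b₃)` has positive entries off the pattern
`i ∈ {j-1, j}`, and `α₁(2) + β₁(2) ≤ α₂(2) + β₂(2)`, then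
`α₂(6) + β₂(6) < α₃(6) + β₃(6)`. -/
theorem seqV_step_ineq (a₁ a₂ a₃ b₁ b₂ b₃ : ℝ)
    (hpos : ∀ i j : ZMod 7, i ≠ j - 1 → i ≠ j → 0 < Vmat a₁ a₂ a₃ b₁ b₂ b₃ i j)
    (h2 : alphaV a₁ a₂ a₃ b₁ b₂ b₃ 0 2 + betaV a₁ a₂ a₃ b₁ b₂ b₃ 0 2 ≤
          alphaV a₁ a₂ a₃ b₁ b₂ b₃ 1 2 + betaV a₁ a₂ a₃ b₁ b₂ b₃ 1 2) :
    alphaV a₁ a₂ a₃ b₁ b₂ b₃ 1 6 + betaV a₁ a₂ a₃ b₁ b₂ b₃ 1 6 <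
    alphaV a₁ a₂ a₃ b₁ b₂ b₃ 2 6 + betaV a₁ a₂ a₃ b₁ b₂ b₃ 2 6 := by
  obtain ⟨w, hw⟩ : ∃ w, w = Wrow a₁ a₂ a₃ b₁ b₂ b₃ := ⟨_, rfl⟩
  have H : ∀ k l : ZMod 7, k ≠ l → k ≠ l + 1 → 0 < br (w k) (w l) (w (l + 1)) := by
    intro k l h1 h3
    have := hpos (k+1) (l+2) (by clear * - k l h1 h3; revert k l; decide) (by clear * - k l h1 h3; revert k l; decide)
    rw [Vmat, Matrix.of_apply, Matrix.det_fin_three] at this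
    have e1 : k + 1 - 1 = k := by ring
    have e2 : l + 2 - 2 = l := by ring
    have e3 : l + 2 - 1 = l + 1 := by ring
    rw [e1, e2, e3, ← hw] at this
    simp [-add_sub_cancel_right] at this
    unfold br
    linarith
  have H0 := fun k l h1 h2 => (H k l h1 h2).ne'
  have w1 : w 1 = ![0,1,1] := by rw [hw]; ext i; fin_cases i <;> rfl
  have w2 : w 2 = ![0,0,1] := by rw [hw]; ext i; fin_cases i <;> rfl
  have w3 : w 3 = ![1,0,0] := by rw [hw]; ext i; fin_cases i <;> rfl
  have w4 : w 4 = ![1,1,0] := by rw [hw]; ext i; fin_cases i <;> rfl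
  have w5 : w 5 = ![a₁,1,b₁] := by rw [hw]; ext i; fin_cases i <;> rfl
  have w6 : w 6 = ![a₂,1,b₂] := by rw [hw]; ext i; fin_cases i <;> rfl
  have w7 : w 0 = ![a₃,1,b₃] := by rw [hw]; ext i; fin_cases i <;> rfl
  have s0 : seqV a₁ a₂ a₃ b₁ b₂ b₃ 0 =
      ((cA (w 1) (w 2) (w 3) (w 4) (w 5), cA (w 1) (w 2) (w 3) (w 4) (w 6),
        cA (w 1) (w 2) (w 3) (w 4) (w 0)),
       (cB (w 1) (w 2) (w 3) (w 4) (w 5), cB (w 1) (w 2) (w 3) (w 4) (w 6),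
        cB (w 1) (w 2) (w 3) (w 4) (w 0))) := by
    rw [w1, w2, w3, w4, w5, w6, w7]
    simp [seqV, cA, cB, br]
  have s1 := seqV_closed a₁ a₂ a₃ b₁ b₂ b₃ w H0 0 1 _ rfl s0
  have s2 := seqV_closed a₁ a₂ a₃ b₁ b₂ b₃ w H0 1 0 _ rfl s1
  have s3 := seqV_closed a₁ a₂ a₃ b₁ b₂ b₃ w H0 2 6 _ rfl s2
  have s4 := seqV_closed a₁ a₂ a₃ b₁ b₂ b₃ w H0 3 5 _ rfl s3
  have s5 := seqV_closed a₁ a₂ a₃ b₁ b₂ b₃ w H0 4 4 _ rfl s4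
  have s6 := seqV_closed a₁ a₂ a₃ b₁ b₂ b₃ w H0 5 3 _ rfl s5
  have h2' : cA (w 6) (w 0) (w 1) (w 2) (w 3) + cB (w 6) (w 0) (w 1) (w 2) (w 3) ≤
      cA (w 6) (w 0) (w 1) (w 2) (w 4) + cB (w 6) (w 0) (w 1) (w 2) (w 4) := by
    simp only [alphaV, betaV, s2] at h2
    exact h2
  suffices hs : cA (w 2) (w 3) (w 4) (w 5) (w 0) + cB (w 2) (w 3) (w 4) (w 5) (w 0) <
      cA (w 2) (w 3) (w 4) (w 5) (w 1) + cB (w 2) (w 3) (w 4) (w 5) (w 1) by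
    simp only [alphaV, betaV, s6]
    exact hs
  -- the needed positive determinants
  have p371 : 0 < 1 - b₃ := by
    have := H 3 0 (by decide) (by decide)
    rw [show (0:ZMod 7) + 1 = 1 from rfl, w7, w1, w3] at this
    simpa [br] using this
  have p471 : 0 < 1 - b₃ - a₃ := by
    have := H 4 0 (by decide) (by decide)
    rw [show (0:ZMod 7) + 1 = 1 from rfl, w7, w1, w4] at this
    simpa [br] using this
  have p012 : 0 < a₃ := by
    have := H 0 1 (by decide) (by decide)
    rw [show (1:ZMod 7) + 1 = 2 from rfl, w7, w1, w2] at this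
    simpa [br] using this
  have p612 : 0 < a₂ := by
    have := H 6 1 (by decide) (by decide)
    rw [show (1:ZMod 7) + 1 = 2 from rfl, w6, w1, w2] at this
    simpa [br] using this
  have p034 : 0 < b₃ := by
    have := H 0 3 (by decide) (by decide)
    rw [show (3:ZMod 7) + 1 = 4 from rfl, w7, w3, w4] at this
    simpa [br] using this
  have p534 : 0 < b₁ := by
    have := H 5 3 (by decide) (by decide)
    rw [show (3:ZMod 7) + 1 = 4 from rfl, w5, w3, w4] at this
    simpa [br] using this
  have p245 : 0 < 1 - a₁ := by
    have := H 2 4 (by decide) (by decide)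
    rw [show (4:ZMod 7) + 1 = 5 from rfl, w5, w2, w4] at this
    simpa [br] using this
  have p256 : 0 < a₁ - a₂ := by
    have := H 2 5 (by decide) (by decide)
    rw [show (5:ZMod 7) + 1 = 6 from rfl, w5, w2, w6] at this
    simpa [br] using this
  have p260 : 0 < a₂ - a₃ := by
    have := H 2 6 (by decide) (by decide)
    rw [show (6:ZMod 7) + 1 = 0 from rfl, w6, w2, w7] at this
    simpa [br] using this
  have pK : 0 < a₂ * (1 - b₃) - a₃ * (1 - b₂) := by
    have := H 6 0 (by decide) (by decide)
    rw [show (0:ZMod 7) + 1 = 1 from rfl, w6, w1, w7] at this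
    simp [br] at this
    linarith
  have key : a₃ ≤ a₂ * (1 - b₃) := by
    have e : (cA (w 6) (w 0) (w 1) (w 2) (w 4) + cB (w 6) (w 0) (w 1) (w 2) (w 4)) -
      (cA (w 6) (w 0) (w 1) (w 2) (w 3) + cB (w 6) (w 0) (w 1) (w 2) (w 3)) =
      a₃ * (a₂ * (1 - b₃) - a₃ * (1 - b₂)) * (a₂ * (1 - b₃) - a₃) /
        (a₂ * (a₂ - a₃) * (1 - b₃) * (1 - b₃ - a₃)) := by
      have e1 : cA (w 6) (w 0) (w 1) (w 2) (w 4) =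
          (b₃ - b₂ - (a₂ * b₃ - a₃ * b₂)) * a₃ / ((1 - b₃ - a₃) * (a₂ - a₃)) := by
        rw [w1, w2, w4, w6, w7]; simp [cA, br]; congr 1; ring
      have e2 : cB (w 6) (w 0) (w 1) (w 2) (w 4) =
          (a₂ * (1 - b₃) - a₃ * (1 - b₂)) / ((1 - b₃ - a₃) * a₂) := by
        rw [w1, w2, w4, w6, w7]; simp [cB, br]; congr 1; ring
      have e3 : cA (w 6) (w 0) (w 1) (w 2) (w 3) =
          (b₃ - b₂) * a₃ / ((1 - b₃) * (a₂ - a₃)) := by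
        rw [w1, w2, w3, w6, w7]; simp [cA, br]
      have e4 : cB (w 6) (w 0) (w 1) (w 2) (w 3) =
          (a₂ * (1 - b₃) - a₃ * (1 - b₂)) / ((1 - b₃) * a₂) := by
        rw [w1, w2, w3, w6, w7]; simp [cB, br]; congr 1; ring
      rw [e1, e2, e3, e4]
      have := p371.ne'
      have := p471.ne'
      have := p612.ne'
      have := p260.ne'
      field_simp
      ring
    by_contra hc
    have hneg : a₂ * (1 - b₃) - a₃ < 0 := by linarith
    have : a₃ * (a₂ * (1 - b₃) - a₃ * (1 - b₂)) * (a₂ * (1 - b₃) - a₃) /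
        (a₂ * (a₂ - a₃) * (1 - b₃) * (1 - b₃ - a₃)) < 0 :=
      div_neg_of_neg_of_pos (mul_neg_of_pos_of_neg (by positivity) hneg) (by positivity)
    linarith
  have key2 : 0 < a₁ * (1 - b₃) - a₃ := by nlinarith
  have e : (cA (w 2) (w 3) (w 4) (w 5) (w 1) + cB (w 2) (w 3) (w 4) (w 5) (w 1)) -
      (cA (w 2) (w 3) (w 4) (w 5) (w 0) + cB (w 2) (w 3) (w 4) (w 5) (w 0)) =
      b₁ * (a₁ * (1 - b₃) - a₃) / ((1 - a₁) * b₃) := by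
    have e1 : cA (w 2) (w 3) (w 4) (w 5) (w 1) = b₁ := by
      rw [w1, w2, w3, w4, w5]; simp [cA, br]
    have e2 : cB (w 2) (w 3) (w 4) (w 5) (w 1) = (1 - a₁ - b₁) / (1 - a₁) := by
      rw [w1, w2, w3, w4, w5]; simp [cB, br]; congr 1; ring
    have e3 : cA (w 2) (w 3) (w 4) (w 5) (w 0) = b₁ / b₃ := by
      rw [w7, w2, w3, w4, w5]; simp [cA, br]
    have e4 : cB (w 2) (w 3) (w 4) (w 5) (w 0) =
        ((a₃ - 1) * b₁ + b₃ * (1 - a₁)) / (b₃ * (1 - a₁)) := by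
      rw [w7, w2, w3, w4, w5]; simp [cB, br]; congr 1; ring
    rw [e1, e2, e3, e4]
    have := p034.ne'
    have := p245.ne'
    field_simp
    ring
  have : 0 < b₁ * (a₁ * (1 - b₃) - a₃) / ((1 - a₁) * b₃) := by positivity
  linarith
end
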